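/- (Converse part of Theorem 2, rate bound.) In the MM-SPIR model (with all constraints), for every size-P subset 𝒫 of {1,…,K}: N·P·L ≤ (N−1)·Σ_{n=1}^{N} H(A_n^{[𝒫]}); equivalently, the sum retrieval rate R = P·L / Σ_{n=1}^{N} H(A_n^{[𝒫]}) satisfies R ≤ 1 − 1/N. -/

import Mathlib

/-!
Write `X = (A_n, Q_n)` for what one database sees. Reliability and database privacy make `X`
conditionally independent of all messages given the requested ones, and by user privacy the same
holds for `X` given `W_T` for *every* `P`-subset `T`. For independent messages the sets `T` with
this property are closed under intersection, and since `P < K` the `P`-subsets intersect in `∅`;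
hence `X` is independent of the messages. Thus `H(A_n | F)` does not drop when the requested
messages `W_𝒫` are added to the condition, and decodability gives
`H(W_𝒫) + H(A_n | F) ≤ H(A_1, …, A_N | F)`. Sum this over `n` and bound the joint entropy of the
answers by `∑ n, H(A_n | F)`.
-/

open Finset

namespace MMSPIR

variable {Ω : Type} [Fintype Ω]

/-- Probability that the random variable `X` takes the value `v`,
under the weight function `p` on the finite sample space `Ω`. -/
noncomputable def prob (p : Ω → ℝ) {V : Type} [DecidableEq V] (X : Ω → V) (v : V) : ℝ :=
  ∑ ω ∈ Finset.univ.filter (fun ω => X ω = v), p ω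

/-- Shannon entropy of `X`, with logarithm taken to base `q`. -/
noncomputable def ent (q : ℕ) (p : Ω → ℝ) {V : Type} [Fintype V] [DecidableEq V]
    (X : Ω → V) : ℝ :=
  -∑ v : V, prob p X v * Real.logb q (prob p X v)

/-- Conditional entropy `H(X | Y)`, base `q`. -/
noncomputable def cent (q : ℕ) (p : Ω → ℝ) {V W : Type} [Fintype V] [DecidableEq V]
    [Fintype W] [DecidableEq W] (X : Ω → V) (Y : Ω → W) : ℝ :=
  ent q p (fun ω => (X ω, Y ω)) - ent q p Y

/-- Mutual information `I(X ; Y)`, base `q`. -/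
noncomputable def mi (q : ℕ) (p : Ω → ℝ) {V W : Type} [Fintype V] [DecidableEq V]
    [Fintype W] [DecidableEq W] (X : Ω → V) (Y : Ω → W) : ℝ :=
  ent q p X + ent q p Y - ent q p (fun ω => (X ω, Y ω))

/-- Conditional mutual information `I(X ; Y | Z)`, base `q`. -/
noncomputable def cmi (q : ℕ) (p : Ω → ℝ) {U V W : Type} [Fintype U] [DecidableEq U]
    [Fintype V] [DecidableEq V] [Fintype W] [DecidableEq W]
    (X : Ω → U) (Y : Ω → V) (Z : Ω → W) : ℝ :=
  cent q p X Z + cent q p Y Z - cent q p (fun ω => (X ω, Y ω)) Z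

/-- `X` and `Y` have the same distribution. -/
def IdentDist (p : Ω → ℝ) {V : Type} [DecidableEq V] (X Y : Ω → V) : Prop :=
  ∀ v, prob p X v = prob p Y v

section Prob

variable {p : Ω → ℝ} {γ α : Type} [DecidableEq γ] [DecidableEq α]

lemma prob_nonneg (hp : ∀ ω, 0 ≤ p ω) (X : Ω → α) (v : α) : 0 ≤ prob p X v :=
  sum_nonneg fun ω _ => hp ω

lemma prob_apply_pos (hp : ∀ ω, 0 ≤ p ω) (X : Ω → α) {ω : Ω} (hω : 0 < p ω) :
    0 < prob p X (X ω) :=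
  hω.trans_le (single_le_sum (f := p) (fun i _ => hp i) (by simp))

lemma prob_comp [Fintype α] (X : Ω → α) (g : α → γ) (u : γ) :
    prob p (fun ω => g (X ω)) u = ∑ v with g v = u, prob p X v := by
  simp only [prob]
  rw [sum_fiberwise_eq_sum_filter univ]
  simp

variable [Fintype α]

lemma sum_prob_mul (X : Ω → α) (g : α → ℝ) :
    ∑ v, prob p X v * g v = ∑ ω, p ω * g (X ω) := by
  simp only [prob, sum_mul]
  rw [← sum_fiberwise univ X fun ω => p ω * g (X ω)]
  refine sum_congr rfl fun v _ => sum_congr rfl fun ω hω => ?_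
  rw [(mem_filter.1 hω).2]

lemma sum_prob (X : Ω → α) : ∑ v, prob p X v = ∑ ω, p ω := by
  simpa using sum_prob_mul (p := p) X fun _ => 1

lemma sum_prob_prod_left (X : Ω → α) (Z : Ω → γ) (z : γ) :
    ∑ x, prob p (fun ω => (X ω, Z ω)) (x, z) = prob p Z z := by
  simp only [prob, Prod.mk.injEq]
  rw [← sum_fiberwise (univ.filter fun ω => Z ω = z) X p]
  simp only [filter_filter, and_comm]

end Prob

namespace IdentDist

variable {p : Ω → ℝ} {γ α β : Type} [DecidableEq γ] [DecidableEq α] {X Y : Ω → γ}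

lemma ent_eq [Fintype γ] (h : IdentDist p X Y) (q : ℕ) : ent q p X = ent q p Y := by
  simp only [ent, h _]

lemma comp [Finite γ] (h : IdentDist p X Y) (g : γ → α) :
    IdentDist p (fun ω => g (X ω)) (fun ω => g (Y ω)) := fun v => by
  cases nonempty_fintype γ
  simp only [prob_comp, h _]

lemma cent_comp_eq [Finite γ] [Fintype α] [Fintype β] [DecidableEq β] (h : IdentDist p X Y)
    (q : ℕ) (f : γ → α) (g : γ → β) :
    cent q p (fun ω => f (X ω)) (fun ω => g (X ω)) =
      cent q p (fun ω => f (Y ω)) (fun ω => g (Y ω)) := by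
  rw [cent, cent, (h.comp fun u => (f u, g u)).ent_eq, (h.comp g).ent_eq]

end IdentDist

section CondIndepDensity

variable {p : Ω → ℝ} {α β γ : Type} [DecidableEq α] [DecidableEq β] [DecidableEq γ]

lemma sum_mul_logb_nonpos {b : ℝ} (hb : 1 < b) (hp : ∀ ω, 0 ≤ p ω) {r : Ω → ℝ}
    (hr : ∀ ω, 0 < p ω → 0 < r ω) (hsum : ∑ ω, p ω * r ω ≤ ∑ ω, p ω) :
    ∑ ω, p ω * Real.logb b (r ω) ≤ 0 := by
  have log_le : ∀ ω, p ω * Real.log (r ω) ≤ p ω * r ω - p ω := fun ω => by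
    obtain h0 | hω := (hp ω).eq_or_lt
    · simp [← h0]
    · nlinarith [Real.log_le_sub_one_of_pos (hr ω hω)]
  have sum_log_le : ∑ ω, p ω * Real.log (r ω) ≤ 0 := by
    refine (sum_le_sum fun ω _ => log_le ω).trans ?_
    rw [sum_sub_distrib]
    linarith
  simp only [Real.logb, ← mul_div_assoc, ← sum_div]
  exact div_nonpos_of_nonpos_of_nonneg sum_log_le (Real.log_pos hb).le

/-- The density at `ω` of the law `P(x | z) P(y | z) P(z)`, under which `X` and `Y` are
conditionally independent given `Z`, with respect to the joint law of `X`, `Y` and `Z`. Its expected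
logarithm is `-I(X ; Y | Z)`. -/
noncomputable def condIndepDensity (p : Ω → ℝ) (X : Ω → α) (Y : Ω → β) (Z : Ω → γ) (ω : Ω) : ℝ :=
  prob p (fun ω => (X ω, Z ω)) (X ω, Z ω) * prob p (fun ω => (Y ω, Z ω)) (Y ω, Z ω) /
    prob p Z (Z ω) / prob p (fun ω => ((X ω, Y ω), Z ω)) ((X ω, Y ω), Z ω)

lemma condIndepDensity_pos (hp : ∀ ω, 0 ≤ p ω) (X : Ω → α) (Y : Ω → β) (Z : Ω → γ) {ω : Ω}
    (hω : 0 < p ω) : 0 < condIndepDensity p X Y Z ω := by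
  have hXZ := prob_apply_pos hp (fun ω => (X ω, Z ω)) hω
  have hYZ := prob_apply_pos hp (fun ω => (Y ω, Z ω)) hω
  have hZ := prob_apply_pos hp Z hω
  have hXYZ := prob_apply_pos hp (fun ω => ((X ω, Y ω), Z ω)) hω
  rw [condIndepDensity]
  positivity

lemma sum_mul_condIndepDensity_le [Finite α] [Finite β] [Finite γ] (hp : ∀ ω, 0 ≤ p ω)
    (X : Ω → α) (Y : Ω → β) (Z : Ω → γ) :
    ∑ ω, p ω * condIndepDensity p X Y Z ω ≤ ∑ ω, p ω := by
  cases nonempty_fintype α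
  cases nonempty_fintype β
  cases nonempty_fintype γ
  set XZ : Ω → α × γ := fun ω => (X ω, Z ω)
  set YZ : Ω → β × γ := fun ω => (Y ω, Z ω)
  set XYZ : Ω → (α × β) × γ := fun ω => ((X ω, Y ω), Z ω)
  let g (t : (α × β) × γ) : ℝ := prob p XZ (t.1.1, t.2) * prob p YZ (t.1.2, t.2) / prob p Z t.2
  have g_nonneg : ∀ t, 0 ≤ g t := fun t =>
    div_nonneg (mul_nonneg (prob_nonneg hp _ _) (prob_nonneg hp _ _)) (prob_nonneg hp _ _)
  calc ∑ ω, p ω * (g (XYZ ω) / prob p XYZ (XYZ ω))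
      = ∑ t, prob p XYZ t * (g t / prob p XYZ t) :=
        (sum_prob_mul XYZ fun t => g t / prob p XYZ t).symm
    _ ≤ ∑ t, g t := sum_le_sum fun t _ => by
        obtain h0 | h0 := eq_or_ne (prob p XYZ t) 0
        · simpa [h0] using g_nonneg t
        · rw [mul_div_cancel₀ _ h0]
    _ = ∑ z, (∑ x, prob p XZ (x, z)) * (∑ y, prob p YZ (y, z)) / prob p Z z := by
        simp only [g, Fintype.sum_prod_type_right, sum_mul_sum, sum_div]
        exact sum_congr rfl fun z _ => sum_comm
    _ = ∑ z, prob p Z z := by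
        simp only [XZ, YZ, sum_prob_prod_left, mul_self_div_self]
    _ = ∑ ω, p ω := sum_prob Z

end CondIndepDensity

section Entropy

variable {q : ℕ} {p : Ω → ℝ} {α β γ δ : Type} [Fintype α] [DecidableEq α]
  [Fintype β] [DecidableEq β] [Fintype γ] [DecidableEq γ] [Fintype δ] [DecidableEq δ]

lemma ent_eq_neg_sum (X : Ω → α) :
    ent q p X = -∑ ω, p ω * Real.logb q (prob p X (X ω)) := by
  rw [ent, sum_prob_mul X fun v => Real.logb q (prob p X v)]

lemma ent_congr {X : Ω → α} {Y : Ω → β} (h : ∀ ω ω', X ω = X ω' ↔ Y ω = Y ω') :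
    ent q p X = ent q p Y := by
  simp only [ent_eq_neg_sum, prob, h]

lemma ent_eq_zero_of_subsingleton [Subsingleton α] (hp1 : ∑ ω, p ω = 1) (X : Ω → α) :
    ent q p X = 0 := by
  have prob_eq_one : ∀ ω, prob p X (X ω) = 1 := fun ω => by
    simp only [prob, Subsingleton.elim (X _) (X ω), filter_true, hp1]
  simp [ent_eq_neg_sum, prob_eq_one]

lemma cent_eq_ent_of_subsingleton [Subsingleton β] (hp1 : ∑ ω, p ω = 1)
    (X : Ω → α) (Y : Ω → β) : cent q p X Y = ent q p X := by
  rw [cent, ent_eq_zero_of_subsingleton hp1 Y, sub_zero]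
  exact ent_congr fun ω ω' => by simp [Subsingleton.elim (Y ω) (Y ω')]

lemma cent_prod (X : Ω → α) (Y : Ω → β) (Z : Ω → γ) :
    cent q p (fun ω => (X ω, Y ω)) Z = cent q p X (fun ω => (Y ω, Z ω)) + cent q p Y Z := by
  have assoc : ent q p (fun ω => ((X ω, Y ω), Z ω)) = ent q p (fun ω => (X ω, Y ω, Z ω)) :=
    ent_congr fun ω ω' => by simp [and_assoc]
  simp only [cent, assoc]
  ring

lemma ent_le_ent_of_factorsThrough (hq : 1 < q) (hp : ∀ ω, 0 ≤ p ω) {X : Ω → α} {Y : Ω → β}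
    (h : X.FactorsThrough Y) : ent q p X ≤ ent q p Y := by
  rw [ent_eq_neg_sum, ent_eq_neg_sum, neg_le_neg_iff]
  refine sum_le_sum fun ω _ => ?_
  obtain h0 | hω := (hp ω).eq_or_lt
  · simp [← h0]
  have fiber_subset : univ.filter (Y · = Y ω) ⊆ univ.filter (X · = X ω) :=
    monotone_filter_right _ fun ω' _ h' => h h'
  have prob_le : prob p Y (Y ω) ≤ prob p X (X ω) :=
    sum_le_sum_of_subset_of_nonneg fiber_subset fun i _ _ => hp i
  gcongr
  · exact Nat.one_lt_cast.2 hq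
  · exact prob_apply_pos hp Y hω

lemma cmi_eq_neg_sum (hp : ∀ ω, 0 ≤ p ω) (X : Ω → α) (Y : Ω → β) (Z : Ω → γ) :
    cmi q p X Y Z = -∑ ω, p ω * Real.logb q (condIndepDensity p X Y Z ω) := by
  simp only [cmi, cent, ent_eq_neg_sum, ← sum_neg_distrib, ← sum_add_distrib, ← sum_sub_distrib]
  refine sum_congr rfl fun ω _ => ?_
  obtain h0 | hω := (hp ω).eq_or_lt
  · simp [← h0]
  have hXZ := (prob_apply_pos hp (fun ω => (X ω, Z ω)) hω).ne'
  have hYZ := (prob_apply_pos hp (fun ω => (Y ω, Z ω)) hω).ne'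
  have hZ := (prob_apply_pos hp Z hω).ne'
  have hXYZ := (prob_apply_pos hp (fun ω => ((X ω, Y ω), Z ω)) hω).ne'
  rw [condIndepDensity, Real.logb_div (by positivity) hXYZ, Real.logb_div (by positivity) hZ,
    Real.logb_mul hXZ hYZ]
  ring

lemma cmi_nonneg (hq : 1 < q) (hp : ∀ ω, 0 ≤ p ω) (X : Ω → α) (Y : Ω → β) (Z : Ω → γ) :
    0 ≤ cmi q p X Y Z := by
  rw [cmi_eq_neg_sum hp, neg_nonneg]
  exact sum_mul_logb_nonpos (Nat.one_lt_cast.2 hq) hp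
    (fun _ => condIndepDensity_pos hp X Y Z) (sum_mul_condIndepDensity_le hp X Y Z)

lemma ent_add_ent_le_of_factorsThrough (hq : 1 < q) (hp : ∀ ω, 0 ≤ p ω)
    {X : Ω → α} {Y : Ω → β} {J : Ω → γ} {I : Ω → δ}
    (hJ : J.FactorsThrough fun ω => (X ω, Y ω))
    (hX : I.FactorsThrough X) (hY : I.FactorsThrough Y) :
    ent q p J + ent q p I ≤ ent q p X + ent q p Y := by
  have submodular := cmi_nonneg hq hp X Y I
  have hXI : ent q p (fun ω => (X ω, I ω)) = ent q p X :=
    ent_congr fun ω ω' => by simpa using @hX ω ω'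
  have hYI : ent q p (fun ω => (Y ω, I ω)) = ent q p Y :=
    ent_congr fun ω ω' => by simpa using @hY ω ω'
  have hJXYI : ent q p J ≤ ent q p (fun ω => ((X ω, Y ω), I ω)) :=
    ent_le_ent_of_factorsThrough hq hp fun _ _ h => hJ (congrArg Prod.fst h)
  simp only [cmi, cent] at submodular
  linarith

lemma mi_nonneg (hq : 1 < q) (hp : ∀ ω, 0 ≤ p ω) (hp1 : ∑ ω, p ω = 1)
    (X : Ω → α) (Y : Ω → β) : 0 ≤ mi q p X Y := by
  simpa only [cmi, mi, cent_eq_ent_of_subsingleton hp1] using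
    cmi_nonneg hq hp X Y fun _ => ()

lemma ent_prod_le (hq : 1 < q) (hp : ∀ ω, 0 ≤ p ω) (hp1 : ∑ ω, p ω = 1)
    (X : Ω → α) (Y : Ω → β) : ent q p (fun ω => (X ω, Y ω)) ≤ ent q p X + ent q p Y :=
  sub_nonneg.1 (mi_nonneg hq hp hp1 X Y)

lemma cent_le_ent (hq : 1 < q) (hp : ∀ ω, 0 ≤ p ω) (hp1 : ∑ ω, p ω = 1)
    (X : Ω → α) (Y : Ω → β) : cent q p X Y ≤ ent q p X :=
  sub_le_iff_le_add.2 (ent_prod_le hq hp hp1 X Y)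

lemma mi_prod_eq_zero_of_ent_eq_add (hq : 1 < q) (hp : ∀ ω, 0 ≤ p ω) (hp1 : ∑ ω, p ω = 1)
    {X : Ω → α} {Y : Ω → β} {Z : Ω → γ}
    (h : ent q p (fun ω => (X ω, Y ω, Z ω)) = ent q p X + ent q p Y + ent q p Z) :
    mi q p X (fun ω => (Y ω, Z ω)) = 0 := by
  refine (mi_nonneg hq hp hp1 _ _).antisymm' ?_
  have := ent_prod_le hq hp hp1 Y Z
  rw [mi]
  linarith

lemma cent_nonneg (hq : 1 < q) (hp : ∀ ω, 0 ≤ p ω) (X : Ω → α) (Y : Ω → β) :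
    0 ≤ cent q p X Y :=
  sub_nonneg.2 (ent_le_ent_of_factorsThrough hq hp fun _ _ h => congrArg Prod.snd h)

lemma cent_le_cent_of_factorsThrough (hq : 1 < q) (hp : ∀ ω, 0 ≤ p ω)
    {X : Ω → α} {Y : Ω → β} {Z : Ω → γ} (h : X.FactorsThrough fun ω => (Y ω, Z ω)) :
    cent q p X Z ≤ cent q p Y Z :=
  sub_le_sub_right (ent_le_ent_of_factorsThrough hq hp fun _ _ hYZ =>
    congrArg₂ Prod.mk (h hYZ) (Prod.mk.inj hYZ).2) _

lemma cent_eq_zero_of_factorsThrough {X : Ω → α} {Y : Ω → β} (h : X.FactorsThrough Y) :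
    cent q p X Y = 0 :=
  sub_eq_zero.2 (ent_congr fun ω ω' => by simpa using @h ω ω')

lemma cent_le_cent_of_cent_eq_zero (hq : 1 < q) (hp : ∀ ω, 0 ≤ p ω)
    (X : Ω → α) {Y : Ω → β} {Z : Ω → γ} (h : cent q p Y Z = 0) :
    cent q p X Z ≤ cent q p X Y := by
  have submodular : ent q p (fun ω => (X ω, Z ω)) + ent q p Y ≤
      ent q p (fun ω => (X ω, Y ω)) + ent q p (fun ω => (Y ω, Z ω)) :=
    ent_add_ent_le_of_factorsThrough hq hp (fun _ _ _ => by simp_all)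
      (fun _ _ h => congrArg Prod.snd h) (fun _ _ h => congrArg Prod.fst h)
  simp only [cent] at h ⊢
  linarith

lemma cent_anti (hq : 1 < q) (hp : ∀ ω, 0 ≤ p ω) (X : Ω → α) {Y : Ω → β} {Z : Ω → γ}
    (h : Y.FactorsThrough Z) : cent q p X Z ≤ cent q p X Y :=
  cent_le_cent_of_cent_eq_zero hq hp X (cent_eq_zero_of_factorsThrough h)

lemma cent_eq_zero_of_factorsThrough_prod (hq : 1 < q) (hp : ∀ ω, 0 ≤ p ω) {X : Ω → α}
    {X' : Ω → δ} {Y : Ω → β} {Z : Ω → γ} (h : cent q p X Y = 0) (hY : Y.FactorsThrough Z)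
    (hX : X'.FactorsThrough fun ω => (X ω, Z ω)) : cent q p X' Z = 0 := by
  refine (cent_nonneg hq hp _ _).antisymm' ?_
  calc cent q p X' Z ≤ cent q p X Z := cent_le_cent_of_factorsThrough hq hp hX
    _ ≤ cent q p X Y := cent_anti hq hp X hY
    _ = 0 := h

lemma mi_le_mi_of_factorsThrough (hq : 1 < q) (hp : ∀ ω, 0 ≤ p ω)
    {X : Ω → α} {X' : Ω → β} {Y : Ω → γ} {Z : Ω → δ}
    (hX : X'.FactorsThrough X) (hY : Z.FactorsThrough Y) :
    mi q p X' Z ≤ mi q p X Y := by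
  have hXY := cent_anti hq hp X hY
  have submodular : ent q p (fun ω => (X ω, Z ω)) + ent q p X' ≤
      ent q p X + ent q p (fun ω => (X' ω, Z ω)) :=
    ent_add_ent_le_of_factorsThrough hq hp (fun _ _ _ => by simp_all) hX
      (fun _ _ h => congrArg Prod.fst h)
  simp only [mi, cent] at hXY ⊢
  linarith

lemma cent_le_cent_prod_of_ent_le_cent (hq : 1 < q) (hp : ∀ ω, 0 ≤ p ω) (hp1 : ∑ ω, p ω = 1)
    {X : Ω → α} {Y : Ω → β} {Z : Ω → γ}
    (h : ent q p (fun ω => (X ω, Y ω)) ≤ cent q p (fun ω => (X ω, Y ω)) Z) :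
    cent q p X Y ≤ cent q p X fun ω => (Y ω, Z ω) := by
  have := cent_le_ent hq hp hp1 Y Z
  rw [cent_prod] at h
  rw [cent]
  linarith

lemma cent_le_cent_of_mi_eq_zero (hq : 1 < q) (hp : ∀ ω, 0 ≤ p ω) (hp1 : ∑ ω, p ω = 1)
    {X : Ω → α} {Y : Ω → β} {Z : Ω → γ} {S : Ω → δ}
    (hX : cent q p X (fun ω => (Y ω, S ω)) = 0) (hY : cent q p Y Z = 0)
    (hS : mi q p S Z = 0) : cent q p X Y ≤ cent q p X Z := by
  have submodular : ent q p (fun ω => (S ω, Z ω)) + ent q p (fun ω => (X ω, Y ω)) ≤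
      ent q p (fun ω => (X ω, Y ω, S ω)) + ent q p (fun ω => (Y ω, X ω, Z ω)) :=
    ent_add_ent_le_of_factorsThrough hq hp (fun _ _ _ => by simp_all)
      (fun _ _ _ => by simp_all) (fun _ _ _ => by simp_all)
  have hYS := ent_prod_le hq hp hp1 Y S
  have hYXZ : cent q p Y (fun ω => (X ω, Z ω)) ≤ cent q p Y Z :=
    cent_anti hq hp Y fun _ _ h => congrArg Prod.snd h
  simp only [cent, mi] at *
  linarith

end Entropy

section Families

variable {Ω ι α : Type*}

/-- The random tuple `(X_i)_i` formed by a whole family of random variables. -/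
def joint (X : ι → Ω → α) (ω : Ω) (i : ι) : α := X i ω

/-- The random tuple `X_T = (X_i)_{i ∈ T}` formed by a subfamily of random variables. -/
def jointOn (X : ι → Ω → α) (T : Finset ι) (ω : Ω) (i : {i // i ∈ T}) : α := X i ω

lemma joint_eq_iff {X : ι → Ω → α} {ω ω' : Ω} :
    joint X ω = joint X ω' ↔ ∀ i, X i ω = X i ω' := funext_iff

lemma jointOn_eq_iff {X : ι → Ω → α} {T : Finset ι} {ω ω' : Ω} :
    jointOn X T ω = jointOn X T ω' ↔ ∀ i ∈ T, X i ω = X i ω' := by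
  simp [jointOn, funext_iff]

lemma jointOn_factorsThrough_joint (X : ι → Ω → α) (T : Finset ι) :
    (jointOn X T).FactorsThrough (joint X) := fun _ _ h =>
  jointOn_eq_iff.2 fun i _ => joint_eq_iff.1 h i

end Families

section FamilyEntropy

variable {q : ℕ} {p : Ω → ℝ} {ι α β γ : Type} [DecidableEq ι] [Fintype α] [DecidableEq α]
  [Fintype β] [DecidableEq β] [Fintype γ] [DecidableEq γ]

lemma cent_jointOn_le_sum (hq : 1 < q) (hp : ∀ ω, 0 ≤ p ω) (X : ι → Ω → α) (T : Finset ι)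
    (Z : Ω → β) : cent q p (jointOn X T) Z ≤ ∑ i ∈ T, cent q p (X i) Z := by
  induction T using Finset.induction_on with
  | empty =>
    exact (cent_eq_zero_of_factorsThrough fun _ _ _ => Subsingleton.elim _ _).le
  | insert a T ha ih =>
    calc cent q p (jointOn X (insert a T)) Z
        ≤ cent q p (fun ω => (X a ω, jointOn X T ω)) Z :=
          cent_le_cent_of_factorsThrough hq hp fun ω ω' => by
            simp only [Prod.mk.injEq, jointOn_eq_iff, forall_mem_insert]
            tauto
      _ = cent q p (X a) (fun ω => (jointOn X T ω, Z ω)) + cent q p (jointOn X T) Z :=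
          cent_prod ..
      _ ≤ cent q p (X a) Z + ∑ i ∈ T, cent q p (X i) Z :=
          add_le_add (cent_anti hq hp _ fun _ _ h => congrArg Prod.snd h) ih
      _ = ∑ i ∈ insert a T, cent q p (X i) Z := by rw [sum_insert ha]

lemma ent_jointOn_le_sum (hq : 1 < q) (hp : ∀ ω, 0 ≤ p ω) (hp1 : ∑ ω, p ω = 1)
    (X : ι → Ω → α) (T : Finset ι) : ent q p (jointOn X T) ≤ ∑ i ∈ T, ent q p (X i) := by
  simpa only [cent_eq_ent_of_subsingleton hp1] using
    cent_jointOn_le_sum hq hp X T fun _ => ()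

variable [Fintype ι]

lemma cent_joint_le_sum (hq : 1 < q) (hp : ∀ ω, 0 ≤ p ω) (X : ι → Ω → α) (Z : Ω → β) :
    cent q p (joint X) Z ≤ ∑ i, cent q p (X i) Z :=
  (cent_le_cent_of_factorsThrough hq hp fun ω ω' => by
    simp only [Prod.mk.injEq, jointOn_eq_iff, joint_eq_iff, mem_univ, true_imp_iff]
    exact And.left).trans (cent_jointOn_le_sum hq hp X univ Z)

lemma ent_joint_le_add_compl (hq : 1 < q) (hp : ∀ ω, 0 ≤ p ω) (hp1 : ∑ ω, p ω = 1)
    (X : ι → Ω → α) (T : Finset ι) :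
    ent q p (joint X) ≤ ent q p (jointOn X T) + ent q p (jointOn X Tᶜ) :=
  (ent_le_ent_of_factorsThrough hq hp fun ω ω' => by
    simp only [Prod.mk.injEq, jointOn_eq_iff, joint_eq_iff, mem_compl]
    exact fun h i => (em (i ∈ T)).elim (h.1 i) (h.2 i)).trans
    (ent_prod_le hq hp hp1 _ _)

lemma ent_jointOn_eq_sum (hq : 1 < q) (hp : ∀ ω, 0 ≤ p ω) (hp1 : ∑ ω, p ω = 1)
    {X : ι → Ω → α} (hX : ent q p (joint X) = ∑ i, ent q p (X i)) (T : Finset ι) :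
    ent q p (jointOn X T) = ∑ i ∈ T, ent q p (X i) := by
  refine (ent_jointOn_le_sum hq hp hp1 X T).antisymm ?_
  have split := ent_joint_le_add_compl hq hp hp1 X T
  have compl_le := ent_jointOn_le_sum hq hp hp1 X Tᶜ
  rw [hX, ← sum_add_sum_compl T] at split
  linarith

/-- As `T ↦ H(W_T)` is modular, `T ↦ H(X | W_T)` is submodular; the hypotheses say that `S` and `T`
minimize it. -/
lemma cent_jointOn_inter_le (hq : 1 < q) (hp : ∀ ω, 0 ≤ p ω) (hp1 : ∑ ω, p ω = 1)
    {W : ι → Ω → α} (hW : ent q p (joint W) = ∑ i, ent q p (W i)) {X : Ω → β} {S T : Finset ι}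
    (hS : cent q p X (jointOn W S) ≤ cent q p X (joint W))
    (hT : cent q p X (jointOn W T) ≤ cent q p X (joint W)) :
    cent q p X (jointOn W (S ∩ T)) ≤ cent q p X (joint W) := by
  have submodular : ent q p (fun ω => (X ω, jointOn W (S ∪ T) ω)) +
      ent q p (fun ω => (X ω, jointOn W (S ∩ T) ω)) ≤
      ent q p (fun ω => (X ω, jointOn W S ω)) + ent q p (fun ω => (X ω, jointOn W T ω)) :=
    ent_add_ent_le_of_factorsThrough hq hp
      (fun _ _ => by simp only [Prod.mk.injEq, jointOn_eq_iff, mem_union]; tauto)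
      (fun _ _ => by simp only [Prod.mk.injEq, jointOn_eq_iff, mem_inter]; tauto)
      (fun _ _ => by simp only [Prod.mk.injEq, jointOn_eq_iff, mem_inter]; tauto)
  have modular : ent q p (jointOn W (S ∪ T)) + ent q p (jointOn W (S ∩ T)) =
      ent q p (jointOn W S) + ent q p (jointOn W T) := by
    simp only [ent_jointOn_eq_sum hq hp hp1 hW, sum_union_inter]
  have union_ge := cent_anti hq hp X (jointOn_factorsThrough_joint W (S ∪ T))
  simp only [cent] at *
  linarith

lemma inf_powersetCard_univ_eq_empty {P : ℕ} (hP : P < Fintype.card ι) :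
    (powersetCard P (univ : Finset ι)).inf id = ∅ := by
  refine eq_empty_of_forall_notMem fun i hi => ?_
  have card_le : P ≤ #({i}ᶜ : Finset ι) := by
    rw [card_compl, card_singleton]
    omega
  obtain ⟨T, hT, hTcard⟩ := exists_subset_card_eq card_le
  have hiT : i ∈ T := inf_le (f := id) (mem_powersetCard_univ.2 hTcard) hi
  simpa using hT hiT

lemma ent_le_cent_joint_of_forall_card_eq (hq : 1 < q) (hp : ∀ ω, 0 ≤ p ω) (hp1 : ∑ ω, p ω = 1)
    {W : ι → Ω → α} (hW : ent q p (joint W) = ∑ i, ent q p (W i)) {X : Ω → β} {P : ℕ}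
    (hP : P < Fintype.card ι)
    (h : ∀ T : Finset ι, #T = P → cent q p X (jointOn W T) ≤ cent q p X (joint W)) :
    ent q p X ≤ cent q p X (joint W) := by
  have inf_le : cent q p X (jointOn W ((powersetCard P univ).inf id)) ≤ cent q p X (joint W) := by
    refine inf_induction (p := fun T => cent q p X (jointOn W T) ≤ cent q p X (joint W)) ?_
      (fun S hS T hT => cent_jointOn_inter_le hq hp hp1 hW hS hT)
      fun T hT => h T (mem_powersetCard_univ.1 hT)
    exact cent_anti hq hp X fun _ _ h => joint_eq_iff.2 fun i => jointOn_eq_iff.1 h i (mem_univ i)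
  rwa [inf_powersetCard_univ_eq_empty hP, cent_eq_ent_of_subsingleton hp1] at inf_le

lemma cent_jointOn_le_of_mi_compl_eq_zero (hq : 1 < q) (hp : ∀ ω, 0 ≤ p ω)
    (hp1 : ∑ ω, p ω = 1) {W : ι → Ω → α} {T : Finset ι} {X : Ω → β} {Y : Ω → γ}
    (hXY : X.FactorsThrough Y) (hWY : cent q p (jointOn W T) Y = 0)
    (hmi : mi q p (jointOn W Tᶜ) Y = 0) :
    cent q p X (jointOn W T) ≤ cent q p X (joint W) := by
  have submodular : ent q p (fun ω => (jointOn W Tᶜ ω, Y ω)) +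
      ent q p (fun ω => (X ω, jointOn W T ω)) ≤
      ent q p (fun ω => (jointOn W T ω, Y ω)) + ent q p (fun ω => (X ω, joint W ω)) :=
    ent_add_ent_le_of_factorsThrough hq hp
      (fun _ _ h => by
        simp only [Prod.mk.injEq] at h ⊢
        exact ⟨jointOn_factorsThrough_joint W _ h.2.2, h.1.2⟩)
      (fun _ _ h => by
        simp only [Prod.mk.injEq] at h ⊢
        exact ⟨hXY h.2, h.1⟩)
      (fun _ _ h => by
        simp only [Prod.mk.injEq] at h ⊢
        exact ⟨h.1, jointOn_factorsThrough_joint W _ h.2⟩)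
  have split := ent_joint_le_add_compl hq hp hp1 W T
  simp only [cent, mi] at *
  linarith

end FamilyEntropy

lemma div_le_one_sub_one_div {𝕜 : Type*} [Field 𝕜] [LinearOrder 𝕜] [IsStrictOrderedRing 𝕜]
    {a b c : 𝕜} (ha : 0 < a) (hc : 1 ≤ c) (h : c * a ≤ (c - 1) * b) :
    a / b ≤ 1 - 1 / c := by
  have hb : 0 < b := pos_of_mul_pos_right ((by positivity : 0 < c * a).trans_le h) (by linarith)
  rw [one_sub_div (by positivity), div_le_div_iff₀ hb (by positivity)]
  linarith

/-- The constraints of an MM-SPIR scheme in which the user retrieves `P` of the messages `W`, with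
user randomness `F`, common randomness `S`, queries `Q` and answers `A`. Messages and databases are
indexed by arbitrary finite types, the messages may have different entropies, and user privacy
leaves out the common randomness. -/
structure IsScheme {ι ν M FT ST QT AT : Type} [Fintype ι] [DecidableEq ι] [Fintype ν]
    [DecidableEq ν] [Fintype M] [DecidableEq M] [Fintype FT] [DecidableEq FT] [Fintype ST]
    [DecidableEq ST] [Fintype QT] [DecidableEq QT] [Fintype AT] [DecidableEq AT]
    (q : ℕ) (p : Ω → ℝ) (P : ℕ) (W : ι → Ω → M) (F : Ω → FT) (S : Ω → ST)
    (Q : Finset ι → ν → Ω → QT) (A : Finset ι → ν → Ω → AT) : Prop where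
  ent_messages : ent q p (joint W) = ∑ k, ent q p (W k)
  ent_sources : ent q p (fun ω => (F ω, S ω, joint W ω)) =
    ent q p F + ent q p S + ent q p (joint W)
  query_determinism : ∀ T, #T = P → cent q p (joint (Q T)) F = 0
  answer_determinism : ∀ T, #T = P → ∀ n,
    cent q p (A T n) (fun ω => (Q T n ω, joint W ω, S ω)) = 0
  reliability : ∀ T, #T = P → cent q p (jointOn W T) (fun ω => (joint (A T) ω, F ω)) = 0
  user_privacy : ∀ n T₁ T₂, #T₁ = P → #T₂ = P →
    IdentDist p (fun ω => (Q T₁ n ω, A T₁ n ω, joint W ω))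
      (fun ω => (Q T₂ n ω, A T₂ n ω, joint W ω))
  database_privacy : ∀ T, #T = P →
    mi q p (jointOn W Tᶜ) (fun ω => (joint (Q T) ω, joint (A T) ω, F ω)) = 0

namespace IsScheme

variable {ι ν M FT ST QT AT : Type} [Fintype ι] [DecidableEq ι] [Fintype ν]
  [DecidableEq ν] [Fintype M] [DecidableEq M] [Fintype FT] [DecidableEq FT] [Fintype ST]
  [DecidableEq ST] [Fintype QT] [DecidableEq QT] [Fintype AT] [DecidableEq AT]
  {q : ℕ} {p : Ω → ℝ} {P : ℕ} {W : ι → Ω → M} {F : Ω → FT} {S : Ω → ST}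
  {Q : Finset ι → ν → Ω → QT} {A : Finset ι → ν → Ω → AT} {T : Finset ι}

lemma cent_query_eq_zero (hq : 1 < q) (hp : ∀ ω, 0 ≤ p ω) (h : IsScheme q p P W F S Q A)
    (hT : #T = P) (n : ν) : cent q p (Q T n) F = 0 :=
  cent_eq_zero_of_factorsThrough_prod hq hp (h.query_determinism T hT) (fun _ _ hF => hF)
    fun _ _ hQF => joint_eq_iff.1 (congrArg Prod.fst hQF) n

lemma mi_common_randomness_eq_zero (hq : 1 < q) (hp : ∀ ω, 0 ≤ p ω) (hp1 : ∑ ω, p ω = 1)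
    (h : IsScheme q p P W F S Q A) : mi q p S (fun ω => (F ω, joint W ω)) = 0 := by
  refine mi_prod_eq_zero_of_ent_eq_add hq hp hp1 ?_
  rw [add_comm (ent q p S), ← h.ent_sources]
  exact ent_congr fun ω ω' => by simp [and_left_comm]

lemma ent_messages_le_cent (hq : 1 < q) (hp : ∀ ω, 0 ≤ p ω) (hp1 : ∑ ω, p ω = 1)
    (h : IsScheme q p P W F S Q A) (T : Finset ι) :
    ∑ k ∈ T, ent q p (W k) ≤ cent q p (jointOn W T) F := by
  have hmi : mi q p (joint W) (fun ω => (F ω, S ω)) = 0 := by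
    refine mi_prod_eq_zero_of_ent_eq_add hq hp hp1 ?_
    rw [add_assoc, add_comm, ← h.ent_sources]
    exact ent_congr fun ω ω' => by simp [and_comm, and_assoc]
  have hmi_le : mi q p (jointOn W T) F ≤ mi q p (joint W) (fun ω => (F ω, S ω)) :=
    mi_le_mi_of_factorsThrough hq hp (jointOn_factorsThrough_joint W T)
      fun _ _ h => congrArg Prod.fst h
  rw [← ent_jointOn_eq_sum hq hp hp1 h.ent_messages, cent]
  rw [hmi, mi] at hmi_le
  linarith

lemma ent_answer_query_le_cent_messages (hq : 1 < q) (hp : ∀ ω, 0 ≤ p ω) (hp1 : ∑ ω, p ω = 1)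
    (h : IsScheme q p P W F S Q A) (hP : P < Fintype.card ι) (hT : #T = P) (n : ν) :
    ent q p (fun ω => (A T n ω, Q T n ω)) ≤
      cent q p (fun ω => (A T n ω, Q T n ω)) (joint W) := by
  refine ent_le_cent_joint_of_forall_card_eq hq hp hp1 h.ent_messages hP fun T' hT' => ?_
  have hidd := h.user_privacy n T T' hT hT'
  have transfer_on : cent q p (fun ω => (A T n ω, Q T n ω)) (jointOn W T') =
      cent q p (fun ω => (A T' n ω, Q T' n ω)) (jointOn W T') :=
    hidd.cent_comp_eq q (fun t => (t.2.1, t.1)) fun t (k : {k // k ∈ T'}) => t.2.2 k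
  have transfer : cent q p (fun ω => (A T n ω, Q T n ω)) (joint W) =
      cent q p (fun ω => (A T' n ω, Q T' n ω)) (joint W) :=
    hidd.cent_comp_eq q (fun t => (t.2.1, t.1)) fun t => t.2.2
  rw [transfer_on, transfer]
  have determined : (fun ω => (A T' n ω, Q T' n ω)).FactorsThrough
      fun ω => (joint (Q T') ω, joint (A T') ω, F ω) := fun _ _ hQAF => by
    simp only [Prod.mk.injEq, joint_eq_iff] at hQAF ⊢
    exact ⟨hQAF.2.1 n, hQAF.1 n⟩
  exact cent_jointOn_le_of_mi_compl_eq_zero hq hp hp1 determined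
    (cent_eq_zero_of_factorsThrough_prod hq hp (h.reliability T' hT')
      (fun _ _ hQAF => congrArg Prod.snd hQAF) fun _ _ hWQAF => congrArg Prod.fst hWQAF)
    (h.database_privacy T' hT')

lemma cent_answer_le_cent_answer_messages (hq : 1 < q) (hp : ∀ ω, 0 ≤ p ω)
    (hp1 : ∑ ω, p ω = 1) (h : IsScheme q p P W F S Q A) (hP : P < Fintype.card ι)
    (hT : #T = P) (n : ν) :
    cent q p (A T n) F ≤ cent q p (A T n) (fun ω => (jointOn W T ω, F ω)) :=
  calc cent q p (A T n) F
      ≤ cent q p (A T n) (Q T n) :=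
        cent_le_cent_of_cent_eq_zero hq hp _ (h.cent_query_eq_zero hq hp hT n)
    _ ≤ cent q p (A T n) (fun ω => (Q T n ω, joint W ω)) :=
        cent_le_cent_prod_of_ent_le_cent hq hp hp1
          (h.ent_answer_query_le_cent_messages hq hp hp1 hP hT n)
    _ ≤ cent q p (A T n) (fun ω => (F ω, joint W ω)) := by
        refine cent_le_cent_of_mi_eq_zero hq hp hp1 ?_ ?_ (h.mi_common_randomness_eq_zero hq hp hp1)
        · exact cent_eq_zero_of_factorsThrough_prod hq hp (h.answer_determinism T hT n)
            (fun _ _ => by simp [and_assoc]) fun _ _ => congrArg Prod.fst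
        · exact cent_eq_zero_of_factorsThrough_prod hq hp (h.cent_query_eq_zero hq hp hT n)
            (fun _ _ => congrArg Prod.fst) fun _ _ _ => by simp_all
    _ ≤ cent q p (A T n) (fun ω => (jointOn W T ω, F ω)) := by
        refine cent_anti hq hp _ fun _ _ hFW => ?_
        simp only [Prod.mk.injEq] at hFW ⊢
        exact ⟨jointOn_factorsThrough_joint W T hFW.2, hFW.1⟩

lemma sum_ent_messages_add_cent_answer_le (hq : 1 < q) (hp : ∀ ω, 0 ≤ p ω)
    (hp1 : ∑ ω, p ω = 1) (h : IsScheme q p P W F S Q A) (hP : P < Fintype.card ι)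
    (hT : #T = P) (n : ν) :
    ∑ k ∈ T, ent q p (W k) + cent q p (A T n) F ≤ cent q p (joint (A T)) F :=
  calc ∑ k ∈ T, ent q p (W k) + cent q p (A T n) F
      ≤ cent q p (jointOn W T) F + cent q p (A T n) (fun ω => (jointOn W T ω, F ω)) :=
        add_le_add (h.ent_messages_le_cent hq hp hp1 T)
          (h.cent_answer_le_cent_answer_messages hq hp hp1 hP hT n)
    _ = cent q p (fun ω => (A T n ω, jointOn W T ω)) F := by rw [cent_prod, add_comm]
    _ ≤ cent q p (fun ω => (jointOn W T ω, joint (A T) ω)) F :=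
        cent_le_cent_of_factorsThrough hq hp fun ω ω' hAW => by
          simp only [Prod.mk.injEq, joint_eq_iff] at hAW ⊢
          exact ⟨hAW.1.2 n, hAW.1.1⟩
    _ = cent q p (joint (A T)) F := by rw [cent_prod, h.reliability T hT, zero_add]

end IsScheme

theorem rate_converse_general
    {ι ν M FT ST QT AT : Type} [Fintype ι] [DecidableEq ι] [Fintype ν] [DecidableEq ν]
    [Nonempty ν] [Fintype M] [DecidableEq M] [Fintype FT] [DecidableEq FT] [Fintype ST]
    [DecidableEq ST] [Fintype QT] [DecidableEq QT] [Fintype AT] [DecidableEq AT]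
    {q : ℕ} (hq : 1 < q) {p : Ω → ℝ} (hp : ∀ ω, 0 ≤ p ω) (hp1 : ∑ ω, p ω = 1)
    {P : ℕ} {W : ι → Ω → M} {F : Ω → FT} {S : Ω → ST}
    {Q : Finset ι → ν → Ω → QT} {A : Finset ι → ν → Ω → AT}
    (h : IsScheme q p P W F S Q A) (hP : P < Fintype.card ι) {T : Finset ι} (hT : #T = P) :
    (Fintype.card ν : ℝ) * ∑ k ∈ T, ent q p (W k) ≤
      ((Fintype.card ν : ℝ) - 1) * ∑ n, ent q p (A T n) := by
  have one_le_card : (1 : ℝ) ≤ Fintype.card ν := by exact_mod_cast Fintype.card_pos (α := ν)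
  have joint_le : cent q p (joint (A T)) F ≤ ∑ n, cent q p (A T n) F :=
    cent_joint_le_sum hq hp (A T) F
  have sum_key : (Fintype.card ν : ℝ) * ∑ k ∈ T, ent q p (W k) + ∑ n, cent q p (A T n) F ≤
      Fintype.card ν * cent q p (joint (A T)) F := by
    simpa [sum_add_distrib] using sum_le_sum fun n (_ : n ∈ univ) =>
      h.sum_ent_messages_add_cent_answer_le hq hp hp1 hP hT n
  calc (Fintype.card ν : ℝ) * ∑ k ∈ T, ent q p (W k)
      ≤ (Fintype.card ν - 1) * cent q p (joint (A T)) F := by linarith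
    _ ≤ (Fintype.card ν - 1) * ∑ n, ent q p (A T n) := by
        gcongr
        exact joint_le.trans (sum_le_sum fun n _ => cent_le_ent hq hp hp1 (A T n) F)

theorem rate_converse
    {Ω MT QT AT FT ST : Type}
    [Fintype Ω] [Fintype MT] [DecidableEq MT] [Fintype QT] [DecidableEq QT]
    [Fintype AT] [DecidableEq AT] [Fintype FT] [DecidableEq FT]
    [Fintype ST] [DecidableEq ST]
    (N K P L q : ℕ) (hN : 2 ≤ N) (hK : 2 ≤ K) (hP1 : 1 ≤ P) (hP2 : P ≤ K - 1)
    (hL : 1 ≤ L) (hq : IsPrimePow q)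
    (p : Ω → ℝ) (hp0 : ∀ ω, 0 ≤ p ω) (hp1 : (∑ ω, p ω) = 1)
    (W : Fin K → Ω → MT) (F : Ω → FT) (S : Ω → ST)
    (Q : Finset (Fin K) → Fin N → Ω → QT)
    (A : Finset (Fin K) → Fin N → Ω → AT)
    (hWk : ∀ k, ent q p (W k) = (L : ℝ))
    (hWall : ent q p (fun ω (k : Fin K) => W k ω) = (K : ℝ) * L)
    (hind : ent q p (fun ω => (F ω, S ω, fun k : Fin K => W k ω)) =
      ent q p F + ent q p S + ent q p (fun ω (k : Fin K) => W k ω))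
    (hQdet : ∀ 𝒫₀ : Finset (Fin K), 𝒫₀.card = P →
      cent q p (fun ω (n : Fin N) => Q 𝒫₀ n ω) F = 0)
    (hAdet : ∀ 𝒫₀ : Finset (Fin K), 𝒫₀.card = P → ∀ n : Fin N,
      cent q p (A 𝒫₀ n) (fun ω => (Q 𝒫₀ n ω, (fun k : Fin K => W k ω), S ω)) = 0)
    (hrel : ∀ 𝒫₀ : Finset (Fin K), 𝒫₀.card = P →
      cent q p (fun ω (k : {x : Fin K // x ∈ 𝒫₀}) => W k.1 ω)
        (fun ω => ((fun n : Fin N => A 𝒫₀ n ω), F ω)) = 0)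
    (hupriv : ∀ (n : Fin N) (𝒫₁ 𝒫₂ : Finset (Fin K)), 𝒫₁.card = P → 𝒫₂.card = P →
      IdentDist p
        (fun ω => (Q 𝒫₁ n ω, A 𝒫₁ n ω, (fun k : Fin K => W k ω), S ω))
        (fun ω => (Q 𝒫₂ n ω, A 𝒫₂ n ω, (fun k : Fin K => W k ω), S ω)))
    (hdpriv : ∀ 𝒫₀ : Finset (Fin K), 𝒫₀.card = P →
      mi q p (fun ω (k : {x : Fin K // x ∈ 𝒫₀ᶜ}) => W k.1 ω)
        (fun ω => ((fun n : Fin N => Q 𝒫₀ n ω), (fun n : Fin N => A 𝒫₀ n ω), F ω)) = 0)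
    : ∀ (𝒫₀ : Finset (Fin K)), 𝒫₀.card = P →
      (N : ℝ) * P * L ≤ ((N : ℝ) - 1) * ∑ n : Fin N, ent q p (A 𝒫₀ n) ∧
      (P : ℝ) * L / (∑ n : Fin N, ent q p (A 𝒫₀ n)) ≤ 1 - 1 / (N : ℝ) := by
  intro 𝒫₀ h𝒫₀
  have hscheme : IsScheme q p P W F S Q A :=
    { ent_messages := hWall.trans (by simp [hWk])
      ent_sources := hind
      query_determinism := hQdet
      answer_determinism := hAdet
      reliability := hrel
      user_privacy := fun n 𝒫₁ 𝒫₂ h₁ h₂ =>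
        (hupriv n 𝒫₁ 𝒫₂ h₁ h₂).comp fun t => (t.1, t.2.1, t.2.2.1)
      database_privacy := hdpriv }
  have : NeZero N := ⟨by omega⟩
  have hmain : (N : ℝ) * (P * L) ≤ ((N : ℝ) - 1) * ∑ n, ent q p (A 𝒫₀ n) := by
    simpa [hWk, h𝒫₀] using rate_converse_general hq.one_lt hp0 hp1 hscheme
      (by rw [Fintype.card_fin]; omega) h𝒫₀
  exact ⟨by rwa [mul_assoc], div_le_one_sub_one_div (by positivity) (by norm_cast; omega) hmain⟩

end MMSPIR
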